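/- There exist absolute constants c, C > 0 such that the following holds. Let M ≥ 2, let μ̂_j = A_j y + b_j (j = 1,…,M) be affine estimators with ‖A_j‖_op ≤ 1 for all j, where the noise ξ has i.i.d. N(0,σ²) coordinates, and let Ĵ ∈ argmin_{j=1,…,M} C_p(e_j). Then for every 0 < ε < c and every x > 0, with probability at least 1 − 2exp(−x), ‖μ̂_Ĵ − f‖² ≤ (1+ε) min_{k=1,…,M} ‖μ̂_k − f‖² + Cσ²(x + 2 log M)/ε. -/

import Mathlib

open MeasureTheory ProbabilityTheory Finset

noncomputable section

/-- Squared Euclidean norm on `Fin n → ℝ`. -/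
def sqNorm {n : ℕ} (v : Fin n → ℝ) : ℝ := ∑ i, (v i) ^ 2

/-- The simplex `Λ^M` of probability vectors in `ℝ^M`. -/
def simplex (M : ℕ) : Set (Fin M → ℝ) := {θ | (∀ j, 0 ≤ θ j) ∧ ∑ j, θ j = 1}

/-- Operator norm (ℓ²→ℓ²) of a square matrix. -/
def opNorm {n : ℕ} (A : Matrix (Fin n) (Fin n) ℝ) : ℝ :=
  sSup {c | ∃ x : Fin n → ℝ, sqNorm x ≤ 1 ∧ c = Real.sqrt (sqNorm (A.mulVec x))}

/-- The distribution of a vector with i.i.d. `N(0,σ²)` coordinates. -/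
def gaussPi (n : ℕ) (σ : ℝ) : Measure (Fin n → ℝ) :=
  Measure.pi fun _ => gaussianReal 0 ⟨σ ^ 2, sq_nonneg σ⟩

/-- The aggregated affine estimator `μ̂_θ = A_θ y + b_θ = ∑_j θ_j (A_j y + b_j)`. -/
def muV {n M : ℕ} (A : Fin M → Matrix (Fin n) (Fin n) ℝ) (b : Fin M → Fin n → ℝ)
    (y : Fin n → ℝ) (θ : Fin M → ℝ) : Fin n → ℝ :=
  ∑ j, θ j • ((A j).mulVec y + b j)

/-- Mallows' `C_p` criterion. -/
def Cp {n M : ℕ} (A : Fin M → Matrix (Fin n) (Fin n) ℝ) (b : Fin M → Fin n → ℝ)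
    (σ : ℝ) (y : Fin n → ℝ) (θ : Fin M → ℝ) : ℝ :=
  sqNorm (muV A b y θ) - 2 * ∑ i, y i * muV A b y θ i
    + 2 * σ ^ 2 * ∑ j, θ j * (A j).trace

/-- The penalty `pen(θ) = ∑_j θ_j ‖μ̂_θ - μ̂_j‖²`. -/
def pen {n M : ℕ} (A : Fin M → Matrix (Fin n) (Fin n) ℝ) (b : Fin M → Fin n → ℝ)
    (y : Fin n → ℝ) (θ : Fin M → ℝ) : ℝ :=
  ∑ j, θ j * sqNorm (muV A b y θ - ((A j).mulVec y + b j))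

/-- The penalized criterion `H_pen(θ) = C_p(θ) + pen(θ)/2`. -/
def Hpen {n M : ℕ} (A : Fin M → Matrix (Fin n) (Fin n) ℝ) (b : Fin M → Fin n → ℝ)
    (σ : ℝ) (y : Fin n → ℝ) (θ : Fin M → ℝ) : ℝ :=
  Cp A b σ y θ + pen A b y θ / 2

/-!
Minimality of `C_p` at `j = Ĵ` bounds `‖μ̂_j - f‖² - ‖μ̂_k - f‖²` by the noise term
`2⟪ξ, μ̂_j - μ̂_k⟫ - 2σ² tr(A_j - A_k)`. With `D = A_j - A_k`, the difference
`μ̂_j - μ̂_k = D ξ + d` is affine in `ξ`. Subtracting a small multiple `e ‖D ξ + d‖²` from the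
noise term pays both for the variance of the Gaussian chaos `⟪ξ, D ξ⟫ - σ² tr D`, of order
`‖D‖_F²`, and for that of the linear part, of order `‖d‖²`; diagonalising the resulting quadratic
form shows that the penalized noise term has an exponential moment of order `e / (10σ²)` at most
`1`. A union bound over the `M²` pairs `(j, k)` then leaves
`e ‖μ̂_j - μ̂_k‖² ≤ 2e (‖μ̂_j - f‖² + ‖μ̂_k - f‖²)`, which is absorbed in the two risks.
-/

open WithLp
open scoped RealInnerProductSpace InnerProduct ENNReal

section ScalarGaussian

lemma exp_mul_gaussianPDFReal {a : ℝ} (ha : a < 1 / 2) (c x : ℝ) :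
    Real.exp (a * x ^ 2 + c * x) * gaussianPDFReal 0 1 x =
      (√(1 - 2 * a))⁻¹ * Real.exp (c ^ 2 / (2 * (1 - 2 * a))) *
        gaussianPDFReal (c / (1 - 2 * a)) (Real.toNNReal (1 - 2 * a)⁻¹) x := by
  have hpos : 0 < 1 - 2 * a := by linarith
  have normalization : (√(2 * Real.pi))⁻¹ =
      (√(1 - 2 * a))⁻¹ * (√(2 * Real.pi * (1 - 2 * a)⁻¹))⁻¹ := by
    rw [← mul_inv, ← Real.sqrt_mul hpos.le, mul_left_comm, mul_inv_cancel₀ hpos.ne', mul_one]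
  have exponent : a * x ^ 2 + c * x + -(x - 0) ^ 2 / (2 * 1) = c ^ 2 / (2 * (1 - 2 * a)) +
      -(x - c / (1 - 2 * a)) ^ 2 / (2 * (1 - 2 * a)⁻¹) := by
    have hne : 1 - a * 2 ≠ 0 := by linarith
    field
  simp only [gaussianPDFReal, NNReal.coe_one, mul_one, Real.coe_toNNReal _ (inv_pos.2 hpos).le]
  calc _ = (√(2 * Real.pi))⁻¹ * Real.exp (a * x ^ 2 + c * x + -(x - 0) ^ 2 / (2 * 1)) := by
        rw [Real.exp_add (a * x ^ 2 + c * x), mul_one, mul_left_comm]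
    _ = _ := by rw [exponent, Real.exp_add, normalization]; ring

lemma lintegral_exp_quadratic_gaussianReal {a : ℝ} (ha : a < 1 / 2) (c : ℝ) :
    ∫⁻ x, ENNReal.ofReal (Real.exp (a * x ^ 2 + c * x)) ∂gaussianReal 0 1 =
      ENNReal.ofReal ((√(1 - 2 * a))⁻¹ * Real.exp (c ^ 2 / (2 * (1 - 2 * a)))) := by
  have hvar : Real.toNNReal (1 - 2 * a)⁻¹ ≠ 0 :=
    (Real.toNNReal_pos.2 (inv_pos.2 (by linarith))).ne'
  rw [gaussianReal_of_var_ne_zero _ one_ne_zero,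
    lintegral_withDensity_eq_lintegral_mul _ (measurable_gaussianPDF 0 1) (by fun_prop)]
  calc _ = ∫⁻ x, ENNReal.ofReal ((√(1 - 2 * a))⁻¹ * Real.exp (c ^ 2 / (2 * (1 - 2 * a)))) *
        gaussianPDF (c / (1 - 2 * a)) (Real.toNNReal (1 - 2 * a)⁻¹) x := by
        refine lintegral_congr fun x => ?_
        rw [Pi.mul_apply, mul_comm, gaussianPDF, gaussianPDF, ← ENNReal.ofReal_mul (by positivity),
          exp_mul_gaussianPDFReal ha, ENNReal.ofReal_mul (by positivity)]
    _ = _ := by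
        rw [lintegral_const_mul _ (measurable_gaussianPDF _ _), lintegral_gaussianPDF_eq_one _ hvar,
          mul_one]

end ScalarGaussian

section StandardGaussian

variable {E : Type*} [NormedAddCommGroup E] [InnerProductSpace ℝ E] [FiniteDimensional ℝ E]

lemma exists_orthonormalBasis_inner_apply_self {T : E →ₗ[ℝ] E} (hT : T.IsSymmetric) :
    ∃ b : OrthonormalBasis (Fin (Module.finrank ℝ E)) ℝ E,
      ∀ z, ⟪z, T z⟫ = ∑ i, ⟪b i, T (b i)⟫ * ⟪b i, z⟫ ^ 2 := by
  refine ⟨hT.eigenvectorBasis rfl, fun z => ?_⟩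
  rw [← (hT.eigenvectorBasis rfl).sum_inner_mul_inner]
  refine sum_congr rfl fun i _ => ?_
  rw [← hT, hT.apply_eigenvectorBasis, inner_smul_left, inner_smul_right,
    real_inner_self_eq_norm_sq, OrthonormalBasis.norm_eq_one, real_inner_comm]
  simp only [RCLike.ofReal_real_eq_id, id_eq, conj_trivial]
  ring

/-- The operator `T = D + D† - D†D`, for which `1 - T = (1 - D)†(1 - D)` and `z ↦ ⟪z, T z⟫` is the
quadratic part of `z ↦ 2⟪z, D z + d⟫ - ‖D z + d‖²`. -/
def penalizedOperator (D : E →L[ℝ] E) : E →L[ℝ] E := D + D† - D† ∘L D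

lemma isSymmetric_penalizedOperator (D : E →L[ℝ] E) :
    (penalizedOperator D : E →ₗ[ℝ] E).IsSymmetric := by
  intro x y
  simp only [penalizedOperator, ContinuousLinearMap.coe_coe, sub_apply,
    add_apply, ContinuousLinearMap.comp_apply, inner_sub_left, inner_add_left,
    inner_sub_right, inner_add_right, ContinuousLinearMap.adjoint_inner_left,
    ContinuousLinearMap.adjoint_inner_right]
  ring

lemma two_mul_inner_sub_norm_sq_eq (D : E →L[ℝ] E) (d z : E) :
    2 * ⟪z, D z + d⟫ - ‖D z + d‖ ^ 2 =
      ⟪z, penalizedOperator D z⟫ + 2 * ⟪d - (D†) d, z⟫ - ‖d‖ ^ 2 := by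
  simp only [penalizedOperator, sub_apply, add_apply,
    ContinuousLinearMap.comp_apply, inner_sub_left, inner_add_right, inner_sub_right,
    ContinuousLinearMap.adjoint_inner_left, ContinuousLinearMap.adjoint_inner_right,
    norm_add_sq_real, real_inner_self_eq_norm_sq]
  rw [real_inner_comm d z, real_inner_comm (D z) z, real_inner_comm (D z) d]
  ring

lemma inner_penalizedOperator_self (D : E →L[ℝ] E) (z : E) :
    ⟪z, penalizedOperator D z⟫ = 2 * ⟪z, D z⟫ - ‖D z‖ ^ 2 := by
  simpa using (two_mul_inner_sub_norm_sq_eq D 0 z).symm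

lemma exp_neg_le_one_sub_inner_penalizedOperator {D : E →L[ℝ] E} (hD : ‖D‖ ≤ 1) {z : E}
    (hz : ‖z‖ = 1) :
    Real.exp (-(2 / 5 * ⟪z, D z⟫)) ≤ 1 - 2 * (⟪z, penalizedOperator D z⟫ / 10) := by
  have hinner : |⟪z, D z⟫| ≤ ‖D z‖ := by simpa [hz] using abs_real_inner_le_norm z (D z)
  have hDz : ‖D z‖ ≤ 1 := by simpa [hz] using D.le_of_opNorm_le hD z
  have hexp := (abs_le.1 (Real.abs_exp_sub_one_sub_id_le (x := -(2 / 5 * ⟪z, D z⟫))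
    (by rw [abs_neg, abs_mul, abs_of_pos (by norm_num)]; linarith))).2
  have hsq : ⟪z, D z⟫ ^ 2 ≤ ‖D z‖ ^ 2 := sq_le_sq.2 (hinner.trans (le_abs_self _))
  rw [inner_penalizedOperator_self]
  linarith [sq_nonneg ⟪z, D z⟫]

lemma inner_penalizedOperator_self_le (D : E →L[ℝ] E) (z : E) :
    ⟪z, penalizedOperator D z⟫ ≤ ‖z‖ ^ 2 := by
  have hsub := norm_sub_sq_real z (D z)
  rw [inner_penalizedOperator_self]
  linarith [sq_nonneg ‖z - D z‖]

lemma norm_sub_adjoint_apply_le {D : E →L[ℝ] E} (hD : ‖D‖ ≤ 1) (d : E) :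
    ‖d - (D†) d‖ ≤ 2 * ‖d‖ := by
  have hadjoint : ‖(D†) d‖ ≤ 1 * ‖d‖ :=
    (D†).le_of_opNorm_le ((LinearIsometryEquiv.norm_map _ D).trans_le hD) d
  linarith [norm_sub_le d ((D†) d)]

lemma inv_sqrt_mul_exp_le_exp_inner {D : E →L[ℝ] E} (hD : ‖D‖ ≤ 1) {z : E} (hz : ‖z‖ = 1)
    (c : ℝ) :
    (√(1 - 2 * (⟪z, penalizedOperator D z⟫ / 10)))⁻¹ *
        Real.exp (c ^ 2 / (2 * (1 - 2 * (⟪z, penalizedOperator D z⟫ / 10)))) ≤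
      Real.exp (⟪z, D z⟫ / 5 + 5 / 8 * c ^ 2) := by
  have hexp := exp_neg_le_one_sub_inner_penalizedOperator hD hz
  have hge : 4 / 5 ≤ 1 - 2 * (⟪z, penalizedOperator D z⟫ / 10) := by
    have := inner_penalizedOperator_self_le D z
    rw [hz] at this
    linarith
  set γ := 1 - 2 * (⟪z, penalizedOperator D z⟫ / 10)
  rw [Real.exp_add]
  gcongr
  · rw [inv_le_comm₀ (by positivity) (Real.exp_pos _), ← Real.exp_neg]
    refine Real.le_sqrt_of_sq_le ?_
    rwa [← Real.exp_nat_mul, show ((2 : ℕ) : ℝ) * -(⟪z, D z⟫ / 5) = -(2 / 5 * ⟪z, D z⟫) by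
      push_cast; ring]
  · rw [div_le_iff₀ (by positivity)]
    nlinarith [sq_nonneg c]

-- `1/10` is the Laplace parameter of the tail bound: the linear term contributes
-- `5/8 * (2‖d‖/5)² = ‖d‖²/10`, which `-‖d‖²/10` exactly cancels.
lemma exp_neg_mul_prod_inv_sqrt_mul_exp_le {D : E →L[ℝ] E} (hD : ‖D‖ ≤ 1) {ι : Type*} [Fintype ι]
    (b : OrthonormalBasis ι ℝ E) (d : E) :
    Real.exp (-(‖d‖ ^ 2 / 10)) * ∏ i, (√(1 - 2 * (⟪b i, penalizedOperator D (b i)⟫ / 10)))⁻¹ *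
        Real.exp ((⟪d - (D†) d, b i⟫ / 5) ^ 2 /
          (2 * (1 - 2 * (⟪b i, penalizedOperator D (b i)⟫ / 10)))) ≤
      Real.exp (LinearMap.trace ℝ E D / 5) := by
  have hlinear : ∑ i, (⟪d - (D†) d, b i⟫ / 5) ^ 2 ≤ 4 / 25 * ‖d‖ ^ 2 := by
    simp only [div_pow, ← sum_div, b.sum_sq_inner_left]
    linarith [pow_le_pow_left₀ (norm_nonneg _) (norm_sub_adjoint_apply_le hD d) 2]
  calc _ ≤ Real.exp (-(‖d‖ ^ 2 / 10)) *
        ∏ i, Real.exp (⟪b i, D (b i)⟫ / 5 + 5 / 8 * (⟪d - (D†) d, b i⟫ / 5) ^ 2) := by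
        gcongr with i
        exact inv_sqrt_mul_exp_le_exp_inner hD (b.norm_eq_one i) _
    _ = Real.exp (-(‖d‖ ^ 2 / 10) + (LinearMap.trace ℝ E D / 5 +
        5 / 8 * ∑ i, (⟪d - (D†) d, b i⟫ / 5) ^ 2)) := by
        rw [← Real.exp_sum, ← Real.exp_add, sum_add_distrib, ← sum_div, ← mul_sum,
          LinearMap.trace_eq_sum_inner _ b]
        rfl
    _ ≤ _ := Real.exp_le_exp.2 (by linarith)

variable [MeasurableSpace E] [BorelSpace E]

lemma lintegral_prod_inner_stdGaussian {ι : Type*} [Fintype ι] (b : OrthonormalBasis ι ℝ E)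
    {g : ι → ℝ → ℝ≥0∞} (hg : ∀ i, Measurable (g i)) :
    ∫⁻ z, ∏ i, g i ⟪b i, z⟫ ∂stdGaussian E = ∏ i, ∫⁻ x, g i x ∂gaussianReal 0 1 := by
  rw [stdGaussian_eq_map_pi_orthonormalBasis b, lintegral_map (by fun_prop) (by fun_prop)]
  simp only [b.orthonormal.inner_right_fintype]
  rw [lintegral_prod_eq_prod_lintegral_of_indepFun univ (fun i (x : ι → ℝ) => g i (x i))
    (iIndepFun_pi fun i => (hg i).aemeasurable) fun i => by fun_prop]
  exact prod_congr rfl fun i _ =>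
    (measurePreserving_eval (fun _ : ι => gaussianReal 0 1) i).lintegral_comp (hg i)

lemma lintegral_exp_quadratic_stdGaussian {ι : Type*} [Fintype ι] (b : OrthonormalBasis ι ℝ E)
    {a : ι → ℝ} (ha : ∀ i, a i < 1 / 2) (c : ι → ℝ) :
    ∫⁻ z, ENNReal.ofReal (Real.exp (∑ i, (a i * ⟪b i, z⟫ ^ 2 + c i * ⟪b i, z⟫))) ∂stdGaussian E =
      ENNReal.ofReal (∏ i, (√(1 - 2 * a i))⁻¹ * Real.exp (c i ^ 2 / (2 * (1 - 2 * a i)))) := by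
  simp only [Real.exp_sum, ENNReal.ofReal_prod_of_nonneg fun _ _ => (Real.exp_pos _).le]
  rw [lintegral_prod_inner_stdGaussian b
      (g := fun i x => ENNReal.ofReal (Real.exp (a i * x ^ 2 + c i * x))) fun i => by fun_prop,
    ENNReal.ofReal_prod_of_nonneg fun i _ => by positivity]
  exact prod_congr rfl fun i _ => lintegral_exp_quadratic_gaussianReal (ha i) (c i)

lemma lintegral_exp_two_mul_inner_sub_norm_sq_le {D : E →L[ℝ] E} (hD : ‖D‖ ≤ 1) (d : E) :
    ∫⁻ z, ENNReal.ofReal (Real.exp ((2 * ⟪z, D z + d⟫ - ‖D z + d‖ ^ 2) / 10)) ∂stdGaussian E ≤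
      ENNReal.ofReal (Real.exp (LinearMap.trace ℝ E D / 5)) := by
  obtain ⟨b, hb⟩ := exists_orthonormalBasis_inner_apply_self (isSymmetric_penalizedOperator D)
  simp only [ContinuousLinearMap.coe_coe] at hb
  have hlt : ∀ i, ⟪b i, penalizedOperator D (b i)⟫ / 10 < 1 / 2 := fun i => by
    have := inner_penalizedOperator_self_le D (b i)
    rw [b.norm_eq_one] at this
    linarith
  have hexponent : ∀ z, (2 * ⟪z, D z + d⟫ - ‖D z + d‖ ^ 2) / 10 = -(‖d‖ ^ 2 / 10) +
      ∑ i, (⟪b i, penalizedOperator D (b i)⟫ / 10 * ⟪b i, z⟫ ^ 2 +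
        ⟪d - (D†) d, b i⟫ / 5 * ⟪b i, z⟫) := fun z => by
    rw [two_mul_inner_sub_norm_sq_eq, hb, ← b.sum_inner_mul_inner (d - (D†) d) z,
      sum_add_distrib]
    simp only [div_mul_eq_mul_div, ← sum_div]
    ring
  simp only [hexponent, Real.exp_add (-(‖d‖ ^ 2 / 10)), ENNReal.ofReal_mul (Real.exp_pos _).le]
  rw [lintegral_const_mul _ (by fun_prop), lintegral_exp_quadratic_stdGaussian b hlt,
    ← ENNReal.ofReal_mul (Real.exp_pos _).le]
  exact ENNReal.ofReal_le_ofReal (exp_neg_mul_prod_inv_sqrt_mul_exp_le hD b d)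

lemma stdGaussian_two_mul_inner_gt_le {D : E →L[ℝ] E} (hD : ‖D‖ ≤ 1) (d : E) (u : ℝ) :
    stdGaussian E {z | 10 * u + 2 * LinearMap.trace ℝ E D + ‖D z + d‖ ^ 2 < 2 * ⟪z, D z + d⟫} ≤
      ENNReal.ofReal (Real.exp (-u)) := by
  set τ := LinearMap.trace ℝ E D
  calc _ ≤ stdGaussian E {z | ENNReal.ofReal (Real.exp (u + τ / 5)) ≤
        ENNReal.ofReal (Real.exp ((2 * ⟪z, D z + d⟫ - ‖D z + d‖ ^ 2) / 10))} :=
        measure_mono fun z hz =>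
          ENNReal.ofReal_le_ofReal (Real.exp_le_exp.2 (by linarith [hz.out]))
    _ ≤ ENNReal.ofReal (Real.exp (τ / 5)) / ENNReal.ofReal (Real.exp (u + τ / 5)) :=
        (meas_ge_le_lintegral_div (by fun_prop) (by simp [Real.exp_pos])
          ENNReal.ofReal_ne_top).trans
          (ENNReal.div_le_div_right (lintegral_exp_two_mul_inner_sub_norm_sq_le hD d) _)
    _ = _ := by
        rw [← ENNReal.ofReal_div_of_pos (Real.exp_pos _), ← Real.exp_sub, sub_add_cancel_right]

lemma stdGaussian_two_mul_inner_smul_gt_le {D : E →L[ℝ] E} {e : ℝ} (he : 0 < e) (hD : e * ‖D‖ ≤ 1)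
    (d : E) (σ u : ℝ) :
    stdGaussian E {z | 10 * σ ^ 2 * u / e + 2 * σ ^ 2 * LinearMap.trace ℝ E D +
        e * ‖D (σ • z) + d‖ ^ 2 < 2 * ⟪σ • z, D (σ • z) + d⟫} ≤
      ENNReal.ofReal (Real.exp (-u)) := by
  obtain rfl | hσ := eq_or_ne σ 0
  · simp [not_lt.2 (mul_nonneg he.le (sq_nonneg ‖d‖))]
  have hnorm : ‖e • D‖ ≤ 1 := by rwa [norm_smul, Real.norm_of_nonneg he.le]
  refine le_trans (measure_mono fun z hz => ?_)
    (stdGaussian_two_mul_inner_gt_le hnorm ((e / σ) • d) u)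
  have hresidual : (e • D) z + (e / σ) • d = (e / σ) • (D (σ • z) + d) := by
    rw [smul_add, map_smul, smul_smul, div_mul_cancel₀ _ hσ, smul_apply]
  have hscale : 0 < e / σ ^ 2 := by positivity
  have := mul_lt_mul_of_pos_left hz hscale
  simp only [Set.mem_ofPred_eq, hresidual, inner_smul_right, inner_smul_left, norm_smul, mul_pow,
    ContinuousLinearMap.toLinearMap_smul, map_smul, smul_eq_mul, Real.norm_eq_abs, sq_abs,
    conj_trivial] at this ⊢
  calc _ = _ := by field
    _ < _ := this
    _ = _ := by field

end StandardGaussian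

section EuclideanCoordinates

variable {n : ℕ}

lemma sqNorm_eq_norm_sq (v : Fin n → ℝ) : sqNorm v = ‖toLp 2 v‖ ^ 2 :=
  (EuclideanSpace.real_norm_sq_eq _).symm

lemma sqNorm_sub_le (v w : Fin n → ℝ) : sqNorm (v - w) ≤ 2 * sqNorm v + 2 * sqNorm w := by
  simp only [sqNorm_eq_norm_sq, toLp_sub]
  have := parallelogram_law_with_norm ℝ (toLp 2 v) (toLp 2 w)
  linarith [mul_self_nonneg ‖toLp 2 v + toLp 2 w‖]

-- `e = ε / (2 * (2 + ε))` is the solution of `(1 + 2 * e) / (1 - 2 * e) = 1 + ε`.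
lemma sqNorm_le_of_le_add_mul_sqNorm_sub {v w : Fin n → ℝ} {ε t : ℝ} (hε : 0 < ε)
    (h : sqNorm v ≤ sqNorm w + t + ε / (2 * (2 + ε)) * sqNorm (v - w)) :
    sqNorm v ≤ (1 + ε) * sqNorm w + (2 + ε) / 2 * t := by
  have habsorb := mul_le_mul_of_nonneg_left (sqNorm_sub_le v w)
    (show 0 ≤ ε / (2 * (2 + ε)) by positivity)
  have hcancel : (2 + ε) * (ε / (2 * (2 + ε)) * (2 * sqNorm v + 2 * sqNorm w)) =
      ε * (sqNorm v + sqNorm w) := by field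
  have := mul_le_mul_of_nonneg_left (h.trans (add_le_add_right habsorb _))
    (show 0 ≤ 2 + ε by positivity)
  linarith

lemma opNorm_eq_norm_toEuclideanCLM (A : Matrix (Fin n) (Fin n) ℝ) :
    opNorm A = ‖Matrix.toEuclideanCLM (𝕜 := ℝ) A‖ := by
  rw [opNorm, ← ContinuousLinearMap.sSup_unitClosedBall_eq_norm]
  congr 1
  ext c
  simp only [sqNorm_eq_norm_sq, Real.sqrt_sq (norm_nonneg _), sq_le_one_iff₀ (norm_nonneg _),
    Set.mem_ofPred_eq, Set.mem_image, mem_closedBall_zero_iff, ← Matrix.toEuclideanCLM_toLp,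
    eq_comm (a := c)]
  exact (WithLp.equiv 2 (Fin n → ℝ)).symm.exists_congr_left.trans Iff.rfl

lemma opNorm_sub_le (A B : Matrix (Fin n) (Fin n) ℝ) : opNorm (A - B) ≤ opNorm A + opNorm B := by
  simpa only [opNorm_eq_norm_toEuclideanCLM, map_sub] using norm_sub_le _ _

lemma trace_toEuclideanCLM (A : Matrix (Fin n) (Fin n) ℝ) :
    LinearMap.trace ℝ (EuclideanSpace ℝ (Fin n)) (Matrix.toEuclideanCLM (𝕜 := ℝ) A) = A.trace :=
  Matrix.trace_toLin_eq A _

lemma gaussPi_eq_map_stdGaussian (n : ℕ) (σ : ℝ) :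
    gaussPi n σ = (stdGaussian (EuclideanSpace ℝ (Fin n))).map fun z => σ • ofLp z := by
  have hscale : (gaussianReal 0 1).map (σ * ·) = gaussianReal 0 ⟨σ ^ 2, sq_nonneg σ⟩ := by
    rw [gaussianReal_map_const_mul, mul_zero, mul_one]
    rfl
  rw [← map_pi_eq_stdGaussian, Measure.map_map (by fun_prop) (by fun_prop), gaussPi, ← hscale]
  exact (Measure.pi_map_pi fun _ => by fun_prop).symm

instance isProbabilityMeasure_gaussPi (n : ℕ) (σ : ℝ) : IsProbabilityMeasure (gaussPi n σ) := by
  rw [gaussPi_eq_map_stdGaussian]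
  exact Measure.isProbabilityMeasure_map (by fun_prop)

lemma gaussPi_two_mul_dotProduct_gt_le {D : Matrix (Fin n) (Fin n) ℝ} {e : ℝ} (he : 0 < e)
    (hD : e * opNorm D ≤ 1) (d : Fin n → ℝ) (σ u : ℝ) :
    gaussPi n σ {ξ | 10 * σ ^ 2 * u / e + 2 * σ ^ 2 * D.trace + e * sqNorm (D.mulVec ξ + d) <
        2 * (ξ ⬝ᵥ (D.mulVec ξ + d))} ≤ ENNReal.ofReal (Real.exp (-u)) := by
  have hmeas : MeasurableSet {ξ | 10 * σ ^ 2 * u / e + 2 * σ ^ 2 * D.trace +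
      e * sqNorm (D.mulVec ξ + d) < 2 * (ξ ⬝ᵥ (D.mulVec ξ + d))} := by
    simp only [sqNorm]
    exact (isOpen_lt (by fun_prop) (by fun_prop)).measurableSet
  rw [gaussPi_eq_map_stdGaussian, Measure.map_apply (by fun_prop) hmeas]
  rw [opNorm_eq_norm_toEuclideanCLM] at hD
  refine le_of_eq_of_le ?_ (stdGaussian_two_mul_inner_smul_gt_le he hD (toLp 2 d) σ u)
  congr 1
  ext z
  simp only [sqNorm_eq_norm_sq, trace_toEuclideanCLM, EuclideanSpace.inner_eq_star_dotProduct,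
    Set.mem_preimage, Set.mem_ofPred_eq, ofLp_add, ofLp_smul, Matrix.ofLp_toEuclideanCLM,
    toLp_add, star_trivial, dotProduct_comm]
  rfl

end EuclideanCoordinates

section Mallows

variable {n M : ℕ} {A : Fin M → Matrix (Fin n) (Fin n) ℝ} {b : Fin M → Fin n → ℝ} {σ : ℝ}
  {f ξ : Fin n → ℝ}

lemma muV_single (A : Fin M → Matrix (Fin n) (Fin n) ℝ) (b : Fin M → Fin n → ℝ) (y : Fin n → ℝ)
    (j : Fin M) : muV A b y (Pi.single j 1) = (A j).mulVec y + b j := by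
  rw [muV, sum_eq_single j (fun k _ hk => by rw [Pi.single_eq_of_ne hk, zero_smul]) (by simp),
    Pi.single_eq_same, one_smul]

lemma Cp_single (A : Fin M → Matrix (Fin n) (Fin n) ℝ) (b : Fin M → Fin n → ℝ) (σ : ℝ)
    (y : Fin n → ℝ) (j : Fin M) :
    Cp A b σ y (Pi.single j 1) = sqNorm ((A j).mulVec y + b j) -
      2 * (y ⬝ᵥ ((A j).mulVec y + b j)) + 2 * σ ^ 2 * (A j).trace := by
  simp [Cp, muV_single, dotProduct, Pi.single_apply]

lemma sqNorm_sub_eq (m f ξ : Fin n → ℝ) :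
    sqNorm (m - f) = sqNorm m - 2 * ((f + ξ) ⬝ᵥ m) + 2 * (ξ ⬝ᵥ m) + sqNorm f := by
  simp only [sqNorm, dotProduct, mul_sum, ← sum_sub_distrib, ← sum_add_distrib]
  exact sum_congr rfl fun i _ => by simp only [Pi.sub_apply, Pi.add_apply]; ring

lemma sqNorm_estimator_sub_le_of_Cp_le {j k : Fin M}
    (hC : Cp A b σ (f + ξ) (Pi.single j 1) ≤ Cp A b σ (f + ξ) (Pi.single k 1)) :
    sqNorm ((A j).mulVec (f + ξ) + b j - f) ≤ sqNorm ((A k).mulVec (f + ξ) + b k - f) +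
      2 * (ξ ⬝ᵥ ((A j).mulVec (f + ξ) + b j - ((A k).mulVec (f + ξ) + b k))) -
      2 * σ ^ 2 * (A j - A k).trace := by
  rw [Cp_single, Cp_single] at hC
  rw [sqNorm_sub_eq _ f ξ, sqNorm_sub_eq _ f ξ, dotProduct_sub, Matrix.trace_sub]
  linarith

lemma sqNorm_estimator_sub_le_of_noise_le {j k : Fin M}
    (hC : Cp A b σ (f + ξ) (Pi.single j 1) ≤ Cp A b σ (f + ξ) (Pi.single k 1))
    {ε t : ℝ} (hε : 0 < ε)
    (hnoise : 2 * (ξ ⬝ᵥ ((A j).mulVec (f + ξ) + b j - ((A k).mulVec (f + ξ) + b k))) ≤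
      t + 2 * σ ^ 2 * (A j - A k).trace + ε / (2 * (2 + ε)) *
        sqNorm ((A j).mulVec (f + ξ) + b j - ((A k).mulVec (f + ξ) + b k))) :
    sqNorm ((A j).mulVec (f + ξ) + b j - f) ≤
      (1 + ε) * sqNorm ((A k).mulVec (f + ξ) + b k - f) + (2 + ε) / 2 * t := by
  refine sqNorm_le_of_le_add_mul_sqNorm_sub hε ?_
  rw [sub_sub_sub_cancel_right]
  linarith [sqNorm_estimator_sub_le_of_Cp_le hC]

lemma estimator_sub_estimator (A : Fin M → Matrix (Fin n) (Fin n) ℝ) (b : Fin M → Fin n → ℝ)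
    (f ξ : Fin n → ℝ) (j k : Fin M) :
    (A j).mulVec (f + ξ) + b j - ((A k).mulVec (f + ξ) + b k) =
      (A j - A k).mulVec ξ + ((A j - A k).mulVec f + (b j - b k)) := by
  simp only [Matrix.sub_mulVec, Matrix.mulVec_add]
  abel

end Mallows

section OracleInequality

variable {Ω : Type*} [MeasurableSpace Ω] {P : Measure Ω}

lemma one_sub_card_mul_le_measure_forall [IsProbabilityMeasure P] {ι : Type*} [Fintype ι]
    {p : ι → Ω → Prop} {δ : ℝ≥0∞} (hp : ∀ i, P {ω | ¬p i ω} ≤ δ) :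
    1 - Fintype.card ι * δ ≤ P {ω | ∀ i, p i ω} := by
  have hunion : P (⋃ i, {ω | ¬p i ω}) ≤ Fintype.card ι * δ :=
    (measure_iUnion_fintype_le P _).trans ((sum_le_sum fun i _ => hp i).trans (by simp))
  have hcover : {ω | ∀ i, p i ω} ∪ ⋃ i, {ω | ¬p i ω} = Set.univ := by
    ext ω
    simp [em, ← not_forall]
  rw [tsub_le_iff_right, ← measure_univ (μ := P), ← hcover]
  exact (measure_union_le _ _).trans (by gcongr)

lemma sq_mul_exp_neg_add_two_mul_log_le (M : ℕ) (x : ℝ) :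
    (M : ℝ) ^ 2 * Real.exp (-(x + 2 * Real.log M)) ≤ Real.exp (-x) := by
  obtain rfl | hM := M.eq_zero_or_pos
  · simpa using (Real.exp_pos (-x)).le
  have hexp : Real.exp (2 * Real.log M) = (M : ℝ) ^ 2 := by
    rw [← Nat.cast_two, Real.exp_nat_mul, Real.exp_log (by positivity)]
  rw [neg_add, Real.exp_add, Real.exp_neg (2 * _), hexp]
  exact le_of_eq (by field)

variable {n M : ℕ} {σ : ℝ} {f : Fin n → ℝ} {A : Fin M → Matrix (Fin n) (Fin n) ℝ}
  {b : Fin M → Fin n → ℝ} {ξ : Ω → Fin n → ℝ} {ε : ℝ}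

lemma measure_not_two_mul_dotProduct_estimator_sub_le (hξ : HasLaw ξ (gaussPi n σ) P) (hε : 0 < ε)
    (hA : ∀ j, ε * opNorm (A j) ≤ 2 + ε) (u : ℝ) (j k : Fin M) :
    P {ω | ¬2 * (ξ ω ⬝ᵥ ((A j).mulVec (f + ξ ω) + b j - ((A k).mulVec (f + ξ ω) + b k))) ≤
        10 * σ ^ 2 * u / (ε / (2 * (2 + ε))) + 2 * σ ^ 2 * (A j - A k).trace +
          ε / (2 * (2 + ε)) *
            sqNorm ((A j).mulVec (f + ξ ω) + b j - ((A k).mulVec (f + ξ ω) + b k))} ≤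
      ENNReal.ofReal (Real.exp (-u)) := by
  have hD : ε / (2 * (2 + ε)) * opNorm (A j - A k) ≤ 1 := by
    have := mul_le_mul_of_nonneg_left (opNorm_sub_le (A j) (A k)) hε.le
    rw [div_mul_eq_mul_div, div_le_one (by positivity)]
    linarith [hA j, hA k]
  have htail := gaussPi_two_mul_dotProduct_gt_le (by positivity) hD
    ((A j - A k).mulVec f + (b j - b k)) σ u
  rw [← hξ.map_eq] at htail
  simp only [estimator_sub_estimator, not_le]
  exact (Measure.le_map_apply hξ.aemeasurable _).trans htail

theorem erm_oracle_inequality_general (hξ : HasLaw ξ (gaussPi n σ) P) {Jhat : Ω → Fin M}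
    (hJ : ∀ ω j, Cp A b σ (f + ξ ω) (Pi.single (Jhat ω) 1) ≤
      Cp A b σ (f + ξ ω) (Pi.single j 1))
    (hε : 0 < ε) (hA : ∀ j, ε * opNorm (A j) ≤ 2 + ε) (x : ℝ) :
    ENNReal.ofReal (1 - Real.exp (-x)) ≤
      P {ω | ∀ k, sqNorm ((A (Jhat ω)).mulVec (f + ξ ω) + b (Jhat ω) - f) ≤
        (1 + ε) * sqNorm ((A k).mulVec (f + ξ ω) + b k - f) +
          10 * (2 + ε) ^ 2 * σ ^ 2 * (x + 2 * Real.log M) / ε} := by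
  have := hξ.isProbabilityMeasure
  set u := x + 2 * Real.log M
  have hnoise := one_sub_card_mul_le_measure_forall fun p : Fin M × Fin M =>
    measure_not_two_mul_dotProduct_estimator_sub_le (f := f) (b := b) hξ hε hA u p.1 p.2
  have hconfidence : ENNReal.ofReal (1 - Real.exp (-x)) ≤
      1 - Fintype.card (Fin M × Fin M) * ENNReal.ofReal (Real.exp (-u)) := by
    rw [ENNReal.ofReal_sub _ (Real.exp_pos _).le, ENNReal.ofReal_one, Fintype.card_prod,
      Fintype.card_fin, ← sq, ← ENNReal.ofReal_natCast, ← ENNReal.ofReal_mul (by positivity),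
      Nat.cast_pow]
    gcongr
    exact sq_mul_exp_neg_add_two_mul_log_le M x
  refine hconfidence.trans (hnoise.trans (measure_mono fun ω hω k => ?_))
  refine (sqNorm_estimator_sub_le_of_noise_le (hJ ω k) hε (hω (Jhat ω, k))).trans_eq ?_
  field

end OracleInequality

/-- **Proposition 3.1**: the empirical risk minimizer over the `C_p` criterion
satisfies a non-sharp oracle inequality. -/
theorem erm_oracle_inequality :
    ∃ c C : ℝ, 0 < c ∧ 0 < C ∧
      ∀ (n M : ℕ), 2 ≤ M → ∀ (σ : ℝ) (f : Fin n → ℝ)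
        (A : Fin M → Matrix (Fin n) (Fin n) ℝ) (b : Fin M → Fin n → ℝ),
        (∀ j, opNorm (A j) ≤ 1) →
        ∀ (Ω : Type) (_ : MeasurableSpace Ω) (P : Measure Ω),
          IsProbabilityMeasure P →
          ∀ (ξ : Ω → Fin n → ℝ), Measurable ξ → P.map ξ = gaussPi n σ →
          ∀ (Jhat : Ω → Fin M),
            (∀ ω j, Cp A b σ (f + ξ ω) (Pi.single (Jhat ω) 1)
              ≤ Cp A b σ (f + ξ ω) (Pi.single j 1)) →
          ∀ ε : ℝ, 0 < ε → ε < c →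
          ∀ x : ℝ, 0 < x →
            ENNReal.ofReal (1 - 2 * Real.exp (-x)) ≤
              P {ω | ∀ k, sqNorm ((A (Jhat ω)).mulVec (f + ξ ω) + b (Jhat ω) - f) ≤
                  (1 + ε) * sqNorm ((A k).mulVec (f + ξ ω) + b k - f)
                    + C * σ ^ 2 * (x + 2 * Real.log M) / ε} := by
  refine ⟨1, 90, one_pos, by norm_num, ?_⟩
  intro n M _ σ f A b hA Ω _ P _ ξ hξ hlaw Jhat hJ ε hε hε1 x hx
  have hεA : ∀ j, ε * opNorm (A j) ≤ 2 + ε := fun j => by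
    linarith [mul_le_of_le_one_right hε.le (hA j)]
  refine (ENNReal.ofReal_le_ofReal (by linarith [Real.exp_pos (-x)])).trans
    ((erm_oracle_inequality_general ⟨hξ.aemeasurable, hlaw⟩ hJ hε hεA x).trans
      (measure_mono fun ω hω k => (hω k).trans ?_))
  gcongr
  nlinarith

end
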